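/- arXiv:1509.06922 — 5 statements merged into one kernel-verified Lean document; each statement's English description precedes it below -/
import Mathlib

section
/- Let V be a finite-dimensional real inner product space, let s be a reflection of V and let h be a rotation of V such that the fixed-point subspace of h is contained in the fixed-point subspace of s. Then the composition s ∘ h is a reflection of V. -/
/-!
For an orthogonal transformation `g` the image of `g - 1` is the orthogonal complement of `Fix g`
(`range_sub_id_eq_orthogonal`). Let `a` span the line `(Fix s)ᗮ`. As `Fix h ≤ Fix s`, the vector
`a` lies in `(Fix h)ᗮ`, so `a = h x - x` for some `x`. Since `h x` and `x` have the same norm,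
the reflection `s` in the hyperplane `aᗮ` exchanges them, so `x` is fixed by `s * h` but not by `h`.
Hence `Fix (s * h)`, which contains `Fix h`, is strictly larger and has codimension at most 1. It is
not all of `V`, because `s * h = 1` would make `Fix h` and `Fix s` coincide, against their
different dimensions.
-/

open Module

/-- The fixed-point subspace of a linear isometry equivalence. -/
noncomputable def fixedSubspace {V : Type} [NormedAddCommGroup V] [InnerProductSpace ℝ V]
    (g : V ≃ₗᵢ[ℝ] V) : Submodule ℝ V :=
  LinearMap.ker ((g.toLinearEquiv : V →ₗ[ℝ] V) - LinearMap.id)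

/-- A reflection: an orthogonal transformation whose fixed-point subspace has codimension 1. -/
def IsReflection {V : Type} [NormedAddCommGroup V] [InnerProductSpace ℝ V]
    (g : V ≃ₗᵢ[ℝ] V) : Prop :=
  finrank ℝ V = finrank ℝ (fixedSubspace g) + 1

/-- A rotation: an orthogonal transformation whose fixed-point subspace has codimension 2. -/
def IsRotation {V : Type} [NormedAddCommGroup V] [InnerProductSpace ℝ V]
    (g : V ≃ₗᵢ[ℝ] V) : Prop :=
  finrank ℝ V = finrank ℝ (fixedSubspace g) + 2

theorem mem_fixedSubspace_iff {V : Type} [NormedAddCommGroup V] [InnerProductSpace ℝ V]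
    (g : V ≃ₗᵢ[ℝ] V) (v : V) : v ∈ fixedSubspace g ↔ g v = v := by
  simp [fixedSubspace, sub_eq_zero]

theorem range_sub_id_eq_orthogonal {V : Type} [NormedAddCommGroup V] [InnerProductSpace ℝ V]
    [FiniteDimensional ℝ V] (g : V ≃ₗᵢ[ℝ] V) :
    LinearMap.range ((g.toLinearEquiv : V →ₗ[ℝ] V) - LinearMap.id) = (fixedSubspace g)ᗮ := by
  -- The image is orthogonal to `Fix g`, and rank-nullity gives equality of dimensions.
  apply Submodule.eq_of_le_of_finrank_eq
  · rintro _ ⟨x, rfl⟩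
    rw [Submodule.mem_orthogonal]
    intro y hy
    rw [mem_fixedSubspace_iff] at hy
    have h1 := g.inner_map_map y x
    rw [hy] at h1
    simp [inner_sub_right, h1]
  · have h1 := LinearMap.finrank_range_add_finrank_ker
      ((g.toLinearEquiv : V →ₗ[ℝ] V) - LinearMap.id)
    have h2 := (fixedSubspace g).finrank_add_finrank_orthogonal
    change _ + finrank ℝ (fixedSubspace g) = _ at h1
    omega

/-- If the nonzero vector `y - x` is orthogonal to the mirror of the reflection `s`, and `x` and `y`
have equal norms, then `s` maps `y` to `x`. -/
theorem IsReflection.apply_eq_of_norm_eq {V : Type} [NormedAddCommGroup V]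
    [InnerProductSpace ℝ V] [FiniteDimensional ℝ V] {s : V ≃ₗᵢ[ℝ] V} (hs : IsReflection s)
    {x y : V} (hxy : ‖y‖ = ‖x‖) (hne : y - x ≠ 0) (hmem : y - x ∈ (fixedSubspace s)ᗮ) :
    s y = x := by
  have hdim : finrank ℝ (fixedSubspace s)ᗮ = 1 := by
    have h2 := (fixedSubspace s).finrank_add_finrank_orthogonal
    unfold IsReflection at hs
    omega
  have hsy : s y - y ∈ (fixedSubspace s)ᗮ := by
    rw [← range_sub_id_eq_orthogonal]
    exact ⟨y, by simp⟩
  obtain ⟨c, hc⟩ := (finrank_eq_one_iff_of_nonzero' (⟨y - x, hmem⟩ : (fixedSubspace s)ᗮ)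
    (by simpa [Subtype.ext_iff] using hne)).1 hdim ⟨s y - y, hsy⟩
  have hc' : c • (y - x) = s y - y := congrArg Subtype.val hc
  obtain ⟨a, rfl⟩ : ∃ a, x = y - a := ⟨y - x, by abel⟩
  rw [sub_sub_cancel] at hc' hne hmem
  have hs' : s y = y + c • a := by rw [hc']; abel
  have e1 : ‖a‖ ^ 2 = 2 * inner ℝ y a := by
    have := norm_sub_sq_real y a
    rw [← hxy] at this
    linarith
  have hpos : 0 < ‖a‖ ^ 2 := by positivity
  have e2 : c * (c + 1) * ‖a‖ ^ 2 = 0 := by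
    have := norm_add_sq_real y (c • a)
    rw [← hs', s.norm_map, inner_smul_right, norm_smul, mul_pow, Real.norm_eq_abs, sq_abs] at this
    linear_combination -this + c * e1
  rcases mul_eq_zero.1 ((mul_eq_zero.1 e2).resolve_right hpos.ne') with h0 | h1
  · -- If `c = 0`, then `y` lies on the mirror, so `y ⊥ a`, contradicting `‖a‖ ^ 2 = 2 * ⟪y, a⟫`.
    have hy : y ∈ fixedSubspace s := by
      rw [mem_fixedSubspace_iff, hs', h0, zero_smul, add_zero]
    have := (Submodule.mem_orthogonal _ _).1 hmem y hy
    rw [this] at e1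
    linarith
  · rw [hs', eq_neg_of_add_eq_zero_left h1, neg_one_smul, sub_eq_add_neg]

theorem reflection_mul_rotation_of_fix_le {V : Type} [NormedAddCommGroup V]
    [InnerProductSpace ℝ V] [FiniteDimensional ℝ V]
    (s h : V ≃ₗᵢ[ℝ] V) (hs : IsReflection s) (hh : IsRotation h)
    (hfix : fixedSubspace h ≤ fixedSubspace s) :
    IsReflection (s * h) := by
  have hsdim : finrank ℝ V = finrank ℝ (fixedSubspace s) + 1 := hs
  have hhdim : finrank ℝ V = finrank ℝ (fixedSubspace h) + 2 := hh
  have hbot : (fixedSubspace s)ᗮ ≠ ⊥ := by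
    intro hb
    have h2 := (fixedSubspace s).finrank_add_finrank_orthogonal
    rw [hb, finrank_bot] at h2
    omega
  obtain ⟨a, ha, ha0⟩ := Submodule.exists_mem_ne_zero_of_ne_bot hbot
  have ha' := Submodule.orthogonal_le hfix ha
  rw [← range_sub_id_eq_orthogonal] at ha'
  obtain ⟨x, rfl⟩ := ha'
  have hx : s (h x) = x :=
    hs.apply_eq_of_norm_eq (h.norm_map x) (by simpa using ha0) (by simpa using ha)
  have hlt : fixedSubspace h < fixedSubspace (s * h) := by
    rw [SetLike.lt_iff_le_and_exists]
    refine ⟨fun v hv => ?_, x, ?_, ?_⟩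
    · have hv' := (mem_fixedSubspace_iff s v).1 (hfix hv)
      rw [mem_fixedSubspace_iff] at hv ⊢
      change s (h v) = v
      rw [hv, hv']
    · exact (mem_fixedSubspace_iff _ _).2 hx
    · intro hmem
      rw [mem_fixedSubspace_iff] at hmem
      exact ha0 (by simp [hmem])
  have hne_top : fixedSubspace (s * h) ≠ ⊤ := by
    intro htop
    have hall : ∀ v, s (h v) = v := fun v =>
      (mem_fixedSubspace_iff (s * h) v).1 (htop ▸ Submodule.mem_top)
    have hle : fixedSubspace s ≤ fixedSubspace h := fun v hv => by
      rw [mem_fixedSubspace_iff] at hv ⊢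
      exact s.injective ((hall v).trans hv.symm)
    have := Submodule.finrank_mono hle
    omega
  have h1 := Submodule.finrank_lt_finrank_of_lt hlt
  have h2 := Submodule.finrank_lt hne_top
  unfold IsReflection
  omega
end

section
/- Let V be a finite-dimensional real inner product space, let W be a finite subgroup of the orthogonal group O(V) generated by reflections, and let h be a rotation of V with determinant 1 that normalizes W (h W h⁻¹ = W). If there exists a reflection s ∈ W whose fixed-point hyperplane contains the fixed-point subspace of h, then the subgroup of O(V) generated by W and h is generated by its reflections. -/
/-!
A rotation `h` times a reflection `s` whose mirror contains `Fix h` is again a reflection: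
`h * s` fixes `Fix h` pointwise, so by Cartan–Dieudonné
(`LinearIsometryEquiv.reflections_generate_dim_aux`) it is a product of at most two
reflections, and its determinant `det h * det s = -1` forces exactly one factor to be nontrivial.
Hence `h = (h * s) * s⁻¹` is a reflection of `⟨W, h⟩` times an element of `W`, and `W` is generated
by its reflections.
-/

open Module

section

variable {V : Type} [NormedAddCommGroup V] [InnerProductSpace ℝ V]

theorem mem_fixedSubspace {g : V ≃ₗᵢ[ℝ] V} {x : V} : x ∈ fixedSubspace g ↔ g x = x := by
  simp [fixedSubspace, sub_eq_zero]

/-- The determinant of a linear isometry equivalence, as a monoid homomorphism. -/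
noncomputable def isometryDet : (V ≃ₗᵢ[ℝ] V) →* ℝ where
  toFun g := LinearMap.det ((g.toLinearEquiv : V ≃ₗ[ℝ] V) : V →ₗ[ℝ] V)
  map_one' := LinearMap.det_id
  map_mul' _ _ := LinearMap.det_comp _ _

theorem isReflection_reflection [FiniteDimensional ℝ V] {v : V} (hv : v ≠ 0) :
    IsReflection (ℝ ∙ v)ᗮ.reflection := by
  have hfix : fixedSubspace (ℝ ∙ v)ᗮ.reflection = (ℝ ∙ v)ᗮ := by
    ext x
    rw [mem_fixedSubspace, Submodule.reflection_eq_self_iff]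
  have h1 := (ℝ ∙ v).finrank_add_finrank_orthogonal
  rw [finrank_span_singleton hv] at h1
  rw [IsReflection, hfix]
  omega

theorem isometryDet_reflection [FiniteDimensional ℝ V] {v : V} (hv : v ≠ 0) :
    isometryDet (ℝ ∙ v)ᗮ.reflection = -1 := by
  refine (Submodule.det_reflection (ℝ ∙ v)ᗮ).trans ?_
  rw [Submodule.orthogonal_orthogonal, finrank_span_singleton hv, pow_one]

/-- The case `v = 0` of the reflection in `(ℝ ∙ v)ᗮ`, in its `simp` normal form. -/
theorem reflection_top_eq_one : (⊤ : Submodule ℝ V).reflection = (1 : V ≃ₗᵢ[ℝ] V) := by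
  ext x
  exact Submodule.reflection_mem_subspace_eq_self Submodule.mem_top

/-- Cartan–Dieudonné, with the bound expressed through `fixedSubspace`. -/
theorem exists_reflection_list [FiniteDimensional ℝ V] (g : V ≃ₗᵢ[ℝ] V) {n : ℕ}
    (hn : finrank ℝ V ≤ finrank ℝ (fixedSubspace g) + n) :
    ∃ l : List V, l.length ≤ n ∧ g = (l.map fun v => (ℝ ∙ v)ᗮ.reflection).prod := by
  apply LinearIsometryEquiv.reflections_generate_dim_aux
  have := (fixedSubspace g).finrank_add_finrank_orthogonal
  have e : (fixedSubspace g) =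
      (ContinuousLinearMap.id ℝ V - (g.toContinuousLinearEquiv : V →L[ℝ] V)).ker := by
    ext x
    rw [mem_fixedSubspace, eq_comm, ← sub_eq_zero]
    rfl
  rw [← e]
  omega

theorem IsReflection.isometryDet_eq [FiniteDimensional ℝ V] {s : V ≃ₗᵢ[ℝ] V}
    (hs : IsReflection s) : isometryDet s = -1 := by
  obtain ⟨l, hl, rfl⟩ := exists_reflection_list s hs.le
  have hne : (l.map fun v => (ℝ ∙ v)ᗮ.reflection).prod ≠ 1 := by
    intro h1
    rw [h1] at hs
    have : fixedSubspace (1 : V ≃ₗᵢ[ℝ] V) = ⊤ := by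
      ext x
      simp [mem_fixedSubspace]
    rw [IsReflection, this, finrank_top] at hs
    omega
  match l, hl with
  | [], _ => simp at hne
  | [v], _ =>
    rcases eq_or_ne v 0 with rfl | hv
    · simp [reflection_top_eq_one] at hne
    · simpa using isometryDet_reflection hv

/-- In codimension at most two, determinant `-1` characterizes reflections. -/
theorem isReflection_of_isometryDet [FiniteDimensional ℝ V] {g : V ≃ₗᵢ[ℝ] V}
    (hg : finrank ℝ V ≤ finrank ℝ (fixedSubspace g) + 2) (hd : isometryDet g = -1) :
    IsReflection g := by
  obtain ⟨l, hl, rfl⟩ := exists_reflection_list g hg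
  clear hg
  match l, hl with
  | [], _ => norm_num at hd
  | [v], _ =>
    rcases eq_or_ne v 0 with rfl | hv
    · norm_num [reflection_top_eq_one] at hd
    · simpa using isReflection_reflection hv
  | [v, w], _ =>
    rcases eq_or_ne v 0 with rfl | hv <;> rcases eq_or_ne w 0 with rfl | hw
    · norm_num [reflection_top_eq_one] at hd
    · simpa [reflection_top_eq_one] using isReflection_reflection hw
    · simpa [reflection_top_eq_one] using isReflection_reflection hv
    · norm_num [isometryDet_reflection hv, isometryDet_reflection hw] at hd

end

/-- If a finite reflection group `W` is normalized by a rotation `h` of determinant 1 and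
some reflection `s ∈ W` has its fixed hyperplane containing the fixed subspace of `h`,
then `⟨W, h⟩` is generated by its reflections. -/
theorem closure_reflections_of_normalizing_rotation {V : Type} [NormedAddCommGroup V]
    [InnerProductSpace ℝ V] [FiniteDimensional ℝ V]
    (W : Subgroup (V ≃ₗᵢ[ℝ] V)) (hWfin : Finite W)
    (hWgen : W = Subgroup.closure {g | g ∈ W ∧ IsReflection g})
    (h : V ≃ₗᵢ[ℝ] V) (hrot : IsRotation h)
    (hdet : LinearMap.det ((h.toLinearEquiv : V ≃ₗ[ℝ] V) : V →ₗ[ℝ] V) = 1)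
    (hnorm : ∀ w, w ∈ W ↔ h * w * h⁻¹ ∈ W)
    (hs : ∃ s ∈ W, IsReflection s ∧ fixedSubspace h ≤ fixedSubspace s) :
    Subgroup.closure ((W : Set (V ≃ₗᵢ[ℝ] V)) ∪ {h}) =
      Subgroup.closure
        {g | g ∈ Subgroup.closure ((W : Set (V ≃ₗᵢ[ℝ] V)) ∪ {h}) ∧ IsReflection g} := by
  obtain ⟨s, hsW, hsr, hle⟩ := hs
  have hWG : W ≤ Subgroup.closure ((W : Set (V ≃ₗᵢ[ℝ] V)) ∪ {h}) :=
    fun w hw => Subgroup.subset_closure (Or.inl hw)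
  have hhG : h ∈ Subgroup.closure ((W : Set (V ≃ₗᵢ[ℝ] V)) ∪ {h}) :=
    Subgroup.subset_closure (Or.inr rfl)
  have hfix : fixedSubspace h ≤ fixedSubspace (h * s) := fun x hx => by
    have hsx := mem_fixedSubspace.1 (hle hx)
    rw [mem_fixedSubspace] at hx ⊢
    rw [LinearIsometryEquiv.coe_mul, Function.comp_apply, hsx, hx]
  have hrefl : IsReflection (h * s) := by
    apply isReflection_of_isometryDet
    · have := Submodule.finrank_mono hfix
      rw [IsRotation] at hrot
      omega
    · have hd : isometryDet h = 1 := hdet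
      rw [map_mul, hd, hsr.isometryDet_eq, one_mul]
  have hWR : W ≤ Subgroup.closure
      {g | g ∈ Subgroup.closure ((W : Set (V ≃ₗᵢ[ℝ] V)) ∪ {h}) ∧ IsReflection g} := by
    conv_lhs => rw [hWgen]
    exact Subgroup.closure_mono fun g hg => ⟨hWG hg.1, hg.2⟩
  apply le_antisymm
  · rw [Subgroup.closure_le]
    rintro g (hg | rfl)
    · exact hWR hg
    · have hgs := Subgroup.mul_mem _
        (Subgroup.subset_closure (show _ ∈ {k | k ∈ _ ∧ IsReflection k} from
          ⟨Subgroup.mul_mem _ hhG (hWG hsW), hrefl⟩)) (Subgroup.inv_mem _ (hWR hsW))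
      rwa [mul_inv_cancel_right] at hgs
  · rw [Subgroup.closure_le]
    exact fun g hg => hg.1
end

section
/- Let V be a finite-dimensional real inner product space with dim V > 2, let G be a finite subgroup of the special orthogonal group SO(V) acting irreducibly on V, and suppose there exists a reflection s of V that normalizes G (s G s⁻¹ = G). Then G is absolutely irreducible, i.e. the complexified representation of G on ℂ ⊗_ℝ V is irreducible. -/
/-!
The argument is Schur's lemma together with a rank estimate.

Let `J` be an endomorphism of `V` commuting with `G`. Since `s` normalizes `G`, the map
`s J s⁻¹ - J` commutes with `G` as well. Its range lies in `U + J U`, where `U` is the line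
`range (s - 1)`, so its rank is at most `2 < dim V`; its kernel is therefore a nonzero invariant
subspace, hence everything, and `J` commutes with `s`. Thus `J` preserves the line `U` and has a
real eigenvalue, whose eigenspace is invariant under `G`: `J` is a scalar
(`commutant_eq_scalar`).

For a `G`-invariant complex subspace `p` of `ℂ ⊗ V`, the real vectors `q = {v | 1 ⊗ v ∈ p}` and
the real parts of elements of `p` both form invariant subspaces of `V`. If `q = V` then `p` is
everything; if all real parts vanish then `p = 0`. In the remaining case taking real parts is a
bijection `p → V`, and `p` is the graph `{1 ⊗ v + i ⊗ J v}` of some `J` commuting with `G`. As `J`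
is a real scalar `c`, `p` contains `(1 + c i) ⊗ v`, hence `1 ⊗ v`, for all `v`, contradicting
`q = 0`.
-/

open Module TensorProduct

/-- The complex-linear extension of a real isometry to the complexification `ℂ ⊗[ℝ] V`. -/
noncomputable def complexify {V : Type} [NormedAddCommGroup V] [InnerProductSpace ℝ V]
    (g : V ≃ₗᵢ[ℝ] V) : (ℂ ⊗[ℝ] V) →ₗ[ℂ] (ℂ ⊗[ℝ] V) :=
  LinearMap.baseChange ℂ ((g.toLinearEquiv : V ≃ₗ[ℝ] V) : V →ₗ[ℝ] V)

/-- The real part `ℂ ⊗ V → V` of a vector of the complexification. -/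
noncomputable def rePart (V : Type) [AddCommGroup V] [Module ℝ V] : (ℂ ⊗[ℝ] V) →ₗ[ℝ] V :=
  (TensorProduct.lid ℝ V).toLinearMap ∘ₗ LinearMap.rTensor V Complex.reLm

/-- The imaginary part `ℂ ⊗ V → V` of a vector of the complexification. -/
noncomputable def imPart (V : Type) [AddCommGroup V] [Module ℝ V] : (ℂ ⊗[ℝ] V) →ₗ[ℝ] V :=
  (TensorProduct.lid ℝ V).toLinearMap ∘ₗ LinearMap.rTensor V Complex.imLm

section Parts

variable {V : Type} [AddCommGroup V] [Module ℝ V]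

lemma rePart_tmul (z : ℂ) (v : V) : rePart V (z ⊗ₜ v) = z.re • v := by
  simp [rePart]

lemma imPart_tmul (z : ℂ) (v : V) : imPart V (z ⊗ₜ v) = z.im • v := by
  simp [imPart]

lemma eq_re_add_im (x : ℂ ⊗[ℝ] V) :
    x = (1 : ℂ) ⊗ₜ[ℝ] rePart V x + Complex.I ⊗ₜ[ℝ] imPart V x := by
  induction x with
  | zero => simp
  | tmul z v =>
    rw [rePart_tmul, imPart_tmul, ← TensorProduct.smul_tmul, ← TensorProduct.smul_tmul,
      ← TensorProduct.add_tmul]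
    congr 1
    apply Complex.ext <;> simp
  | add x y hx hy =>
    rw [map_add, map_add, TensorProduct.tmul_add, TensorProduct.tmul_add]
    nth_rewrite 1 [hx, hy]
    abel

lemma rePart_I_smul (x : ℂ ⊗[ℝ] V) : rePart V (Complex.I • x) = - imPart V x := by
  induction x with
  | zero => simp
  | tmul z v => rw [TensorProduct.smul_tmul', rePart_tmul, imPart_tmul]; simp
  | add x y hx hy => rw [smul_add, map_add, map_add, hx, hy, neg_add]

lemma rePart_baseChange (f : V →ₗ[ℝ] V) (x : ℂ ⊗[ℝ] V) :
    rePart V (LinearMap.baseChange ℂ f x) = f (rePart V x) := by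
  induction x with
  | zero => simp
  | tmul z v => simp [rePart_tmul]
  | add x y hx hy => simp only [map_add, hx, hy]

lemma imPart_baseChange (f : V →ₗ[ℝ] V) (x : ℂ ⊗[ℝ] V) :
    imPart V (LinearMap.baseChange ℂ f x) = f (imPart V x) := by
  induction x with
  | zero => simp
  | tmul z v => simp [imPart_tmul]
  | add x y hx hy => simp only [map_add, hx, hy]

end Parts

/-- The commutant of an irreducible group normalized by a reflection consists of real scalars. -/
lemma commutant_eq_scalar {V : Type} [NormedAddCommGroup V]
    [InnerProductSpace ℝ V] [FiniteDimensional ℝ V] (hdim : 2 < finrank ℝ V)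
    (G : Subgroup (V ≃ₗᵢ[ℝ] V))
    (hirr : ∀ p : Submodule ℝ V, (∀ g ∈ G, ∀ v ∈ p, g v ∈ p) → p = ⊥ ∨ p = ⊤)
    (s : V ≃ₗᵢ[ℝ] V) (hs : IsReflection s)
    (hnorm : ∀ g, g ∈ G ↔ s * g * s⁻¹ ∈ G)
    (J : V →ₗ[ℝ] V) (hJ : ∀ g ∈ G, ∀ v, J (g v) = g (J v)) :
    ∃ c : ℝ, ∀ v, J v = c • v := by
  set A : V →ₗ[ℝ] V := (s.toLinearEquiv : V →ₗ[ℝ] V) - LinearMap.id with hA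
  have hAv : ∀ v, A v = s v - v := fun v => rfl
  have hrank : finrank ℝ (LinearMap.range A) = 1 := by
    have h1 := LinearMap.finrank_range_add_finrank_ker A
    have h2 : finrank ℝ V = finrank ℝ (LinearMap.ker A) + 1 := hs
    omega
  -- A map commuting with `G` is zero or injective.
  have schur : ∀ T : V →ₗ[ℝ] V, (∀ g ∈ G, ∀ v, T (g v) = g (T v)) →
      LinearMap.ker T = ⊥ ∨ LinearMap.ker T = ⊤ := by
    intro T hT
    apply hirr
    intro g hg v hv
    rw [LinearMap.mem_ker] at hv ⊢
    rw [hT g hg, hv, map_zero]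
  set T : V →ₗ[ℝ] V :=
    (s.toLinearEquiv : V →ₗ[ℝ] V) ∘ₗ J ∘ₗ (s.symm.toLinearEquiv : V →ₗ[ℝ] V) - J with hTdef
  have hTv : ∀ v, T v = s (J (s.symm v)) - J v := fun v => rfl
  have hTG : ∀ g ∈ G, ∀ v, T (g v) = g (T v) := by
    intro g hg v
    have hg' : s⁻¹ * g * s ∈ G := by
      rw [hnorm]
      simpa [mul_assoc] using hg
    have h1 : s.symm (g v) = (s⁻¹ * g * s) (s.symm v) := by
      change s.symm (g v) = s.symm (g (s (s.symm v)))
      rw [s.apply_symm_apply]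
    have h2 : s ((s⁻¹ * g * s) (J (s.symm v))) = g (s (J (s.symm v))) := by
      change s (s.symm (g (s (J (s.symm v))))) = _
      rw [s.apply_symm_apply]
    rw [hTv, hTv, h1, hJ _ hg', h2, hJ g hg, map_sub]
  have hTrange : LinearMap.range T ≤
      LinearMap.range A ⊔ (LinearMap.range A).map J := by
    rintro _ ⟨v, rfl⟩
    have h : T v = A (J (s.symm v)) + J (A (-s.symm v)) := by
      rw [hTv, hAv, hAv]
      simp only [map_neg, map_sub, s.apply_symm_apply]
      abel
    rw [h]
    exact Submodule.add_mem_sup ⟨_, rfl⟩ ⟨_, ⟨_, rfl⟩, rfl⟩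
  have hTker : LinearMap.ker T = ⊤ := by
    refine (schur T hTG).resolve_left fun hbot => ?_
    have h1 := LinearMap.finrank_range_add_finrank_ker T
    rw [hbot, finrank_bot] at h1
    have h2 := Submodule.finrank_mono hTrange
    have h3 := Submodule.finrank_add_le_finrank_add_finrank (LinearMap.range A)
      ((LinearMap.range A).map J)
    have h4 := Submodule.finrank_map_le J (LinearMap.range A)
    omega
  have hcomm : ∀ v, J (s v) = s (J v) := by
    intro v
    have h : T (s v) = 0 := by
      rw [← LinearMap.mem_ker, hTker]; trivial
    rw [hTv, s.symm_apply_apply, sub_eq_zero] at h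
    exact h.symm
  obtain ⟨⟨a, b, rfl⟩, ha0, ha⟩ := finrank_eq_one_iff'.mp hrank
  obtain ⟨c, hc⟩ := ha ⟨J (A b), J b, by rw [hAv, hAv, map_sub, hcomm]⟩
  have hc' : c • A b = J (A b) := congrArg Subtype.val hc
  have hA0 : A b ≠ 0 := fun h => ha0 (Subtype.ext h)
  refine ⟨c, fun v => ?_⟩
  have hk := schur (J - c • LinearMap.id) (by
    intro g hg v
    simp [hJ g hg])
  have hmem : A b ∈ LinearMap.ker (J - c • LinearMap.id) := by
    simp [← hc']
  rcases hk with hk | hk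
  · rw [hk, Submodule.mem_bot] at hmem
    exact absurd hmem hA0
  · have hv : v ∈ LinearMap.ker (J - c • LinearMap.id) := by rw [hk]; trivial
    simpa [sub_eq_zero] using hv

/-- An irreducible finite subgroup of `SO(V)`, `dim V > 2`, normalized by a reflection,
is absolutely irreducible. -/
theorem absolutely_irreducible_of_normalizing_reflection {V : Type} [NormedAddCommGroup V]
    [InnerProductSpace ℝ V] [FiniteDimensional ℝ V] (hdim : 2 < finrank ℝ V)
    (G : Subgroup (V ≃ₗᵢ[ℝ] V)) (hGfin : Finite G)
    (hSO : ∀ g ∈ G, LinearMap.det ((g.toLinearEquiv : V ≃ₗ[ℝ] V) : V →ₗ[ℝ] V) = 1)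
    (hirr : ∀ p : Submodule ℝ V, (∀ g ∈ G, ∀ v ∈ p, g v ∈ p) → p = ⊥ ∨ p = ⊤)
    (s : V ≃ₗᵢ[ℝ] V) (hs : IsReflection s)
    (hnorm : ∀ g, g ∈ G ↔ s * g * s⁻¹ ∈ G) :
    ∀ p : Submodule ℂ (ℂ ⊗[ℝ] V),
      (∀ g ∈ G, ∀ x ∈ p, complexify g x ∈ p) → p = ⊥ ∨ p = ⊤ := by
  intro p hp
  have hre : ∀ (g : V ≃ₗᵢ[ℝ] V) x, rePart V (complexify g x) = g (rePart V x) :=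
    fun g x => rePart_baseChange _ x
  have him : ∀ (g : V ≃ₗᵢ[ℝ] V) x, imPart V (complexify g x) = g (imPart V x) :=
    fun g x => imPart_baseChange _ x
  have hsmul : ∀ (z : ℂ) (v : V), z ⊗ₜ[ℝ] v = z • ((1 : ℂ) ⊗ₜ[ℝ] v) := by
    intro z v
    rw [TensorProduct.smul_tmul', smul_eq_mul, mul_one]
  let q : Submodule ℝ V :=
    (p.restrictScalars ℝ).comap (TensorProduct.mk ℝ ℂ V 1)
  have hq : ∀ v, v ∈ q ↔ (1 : ℂ) ⊗ₜ[ℝ] v ∈ p := fun v => Iff.rfl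
  have hqinv : ∀ g ∈ G, ∀ v ∈ q, g v ∈ q := by
    intro g hg v hv
    exact hp g hg _ ((hq v).mp hv)
  rcases hirr q hqinv with hqb | hqt
  swap
  · right
    rw [eq_top_iff]
    intro x _
    have hall : ∀ v, (1 : ℂ) ⊗ₜ[ℝ] v ∈ p := fun v => by
      rw [← hq, hqt]; trivial
    rw [eq_re_add_im x, hsmul Complex.I]
    exact p.add_mem (hall _) (p.smul_mem _ (hall _))
  let R : (p.restrictScalars ℝ) →ₗ[ℝ] V := (rePart V).domRestrict (p.restrictScalars ℝ)
  have hR : ∀ x, R x = rePart V x.1 := fun x => rfl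
  have hRinv : ∀ g ∈ G, ∀ v ∈ LinearMap.range R, g v ∈ LinearMap.range R := by
    rintro g hg _ ⟨x, rfl⟩
    exact ⟨⟨complexify g x.1, hp g hg _ x.2⟩, hre g x.1⟩
  rcases hirr _ hRinv with hRb | hRt
  · left
    rw [eq_bot_iff]
    intro x hx
    have hz : ∀ y ∈ p, rePart V y = 0 := fun y hy => by
      have : R ⟨y, hy⟩ ∈ LinearMap.range R := ⟨_, rfl⟩
      rw [hRb, Submodule.mem_bot] at this
      exact this
    have h2 := hz _ (p.smul_mem Complex.I hx)
    rw [rePart_I_smul, neg_eq_zero] at h2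
    rw [Submodule.mem_bot, eq_re_add_im x, hz x hx, h2]
    simp
  exfalso
  have hinj : Function.Injective R := by
    rw [← LinearMap.ker_eq_bot, eq_bot_iff]
    rintro ⟨x, hx⟩ hx0
    have hr : rePart V x = 0 := hx0
    have hx' : x = Complex.I • ((1 : ℂ) ⊗ₜ[ℝ] imPart V x) := by
      conv_lhs => rw [eq_re_add_im x, hr]
      rw [TensorProduct.tmul_zero, zero_add, hsmul]
    -- A purely imaginary element of `p` is `i` times a real one.
    have hi : imPart V x ∈ q := by
      rw [hq]
      have hx2 : Complex.I • ((1 : ℂ) ⊗ₜ[ℝ] imPart V x) ∈ p := hx' ▸ hx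
      exact (p.smul_mem_iff Complex.I_ne_zero).mp hx2
    rw [hqb, Submodule.mem_bot] at hi
    rw [Submodule.mem_bot]
    apply Subtype.ext
    change x = 0
    rw [hx', hi, TensorProduct.tmul_zero, smul_zero]
  let e := LinearEquiv.ofBijective R ⟨hinj, LinearMap.range_eq_top.mp hRt⟩
  have he : ∀ v, rePart V (e.symm v).1 = v := fun v => e.apply_symm_apply v
  let J : V →ₗ[ℝ] V :=
    (imPart V) ∘ₗ (p.restrictScalars ℝ).subtype ∘ₗ e.symm.toLinearMap
  have hJv : ∀ v, J v = imPart V (e.symm v).1 := fun v => rfl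
  have hJ : ∀ g ∈ G, ∀ v, J (g v) = g (J v) := by
    intro g hg v
    have h : e.symm (g v) = ⟨complexify g (e.symm v).1, hp g hg _ (e.symm v).2⟩ := by
      apply hinj
      rw [hR, hR, he, hre, he]
    rw [hJv, h, hJv, him]
  obtain ⟨c, hc⟩ := commutant_eq_scalar hdim G hirr s hs hnorm J hJ
  have hne : (1 + c * Complex.I : ℂ) ≠ 0 := fun h => by
    have := congrArg Complex.re h
    simp at this
  have hall : q = ⊤ := by
    rw [eq_top_iff]
    intro v _
    rw [hq, ← p.smul_mem_iff hne]
    have hmem : (e.symm v).1 ∈ p := (e.symm v).2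
    rw [eq_re_add_im (e.symm v).1, he, ← hJv, hc, ← TensorProduct.smul_tmul,
      ← TensorProduct.add_tmul, hsmul, Complex.real_smul] at hmem
    exact hmem
  have h1 : finrank ℝ q = 0 := by rw [hqb, finrank_bot]
  rw [hall, finrank_top] at h1
  omega
end

section
/- Let G be a group and let Z₁ be a subgroup of the center of G with exactly two elements such that the quotient group G/Z₁ is perfect. Then either G is perfect, or the commutator subgroup G′ of G satisfies G′ ∩ Z₁ = {1} and G′ · Z₁ = G, so that G is the internal direct product of G′ and Z₁ (and G ≅ (G/Z₁) × Z₁). -/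
/-!
The quotient map sends `[G, G]` onto `[G ⧸ Z₁, G ⧸ Z₁] = G ⧸ Z₁`, so `[G, G] ⊔ Z₁ = ⊤`. As `Z₁` has
prime order, `[G, G] ⊓ Z₁` is trivial or all of `Z₁`. In the latter case `Z₁ ≤ [G, G]`, hence
`G` is perfect. In the former case the factors commute because `Z₁` is central, so
multiplication is an isomorphism `[G, G] × Z₁ ≃* G`, and `[G, G] ≃* G ⧸ Z₁` via the quotient map.
-/

theorem commutator_sup_eq_top_of_quotient_perfect {G : Type*} [Group G] (N : Subgroup G)
    [N.Normal] (hperf : commutator (G ⧸ N) = ⊤) : commutator G ⊔ N = ⊤ := by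
  have hmap : (commutator G).map (QuotientGroup.mk' N) = ⊤ := by
    rw [commutator_def, Subgroup.map_commutator,
      Subgroup.map_top_of_surjective _ (QuotientGroup.mk'_surjective N), ← commutator_def, hperf]
  have h := Subgroup.comap_map_eq (QuotientGroup.mk' N) (commutator G)
  rw [hmap, Subgroup.comap_top, QuotientGroup.ker_mk'] at h
  exact h.symm

/-- A central subgroup `Z` with a complement `H` splits off as a direct factor. -/
theorem nonempty_mulEquiv_quotient_prod_of_le_center {G : Type*} [Group G] (H Z : Subgroup G)
    [Z.Normal] (hZ : Z ≤ Subgroup.center G) (hinf : H ⊓ Z = ⊥) (hsup : H ⊔ Z = ⊤) :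
    Nonempty (G ≃* (G ⧸ Z) × Z) := by
  have hcomm : ∀ (h : H) (z : Z), Commute (H.subtype h) (Z.subtype z) := fun h z =>
    Subgroup.mem_center_iff.mp (hZ z.2) h
  have hmul : Function.Bijective (H.subtype.noncommCoprod Z.subtype hcomm) := by
    constructor
    · rw [MonoidHom.noncommCoprod_injective]
      refine ⟨H.subtype_injective, Z.subtype_injective, ?_⟩
      rw [Subgroup.range_subtype, Subgroup.range_subtype]
      exact disjoint_iff.mpr hinf
    · rw [← MonoidHom.range_eq_top, MonoidHom.noncommCoprod_range, Subgroup.range_subtype,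
        Subgroup.range_subtype, hsup]
  have hquot : Function.Bijective ((QuotientGroup.mk' Z).comp H.subtype) := by
    constructor
    · rw [injective_iff_map_eq_one]
      intro x hx
      have hxZ : (x : G) ∈ Z := (QuotientGroup.eq_one_iff (x : G)).mp hx
      have hx1 : (x : G) ∈ H ⊓ Z := ⟨x.2, hxZ⟩
      rw [hinf, Subgroup.mem_bot] at hx1
      exact Subtype.ext hx1
    · intro q
      obtain ⟨g, rfl⟩ := QuotientGroup.mk'_surjective Z q
      obtain ⟨⟨h, z⟩, rfl⟩ := hmul.2 g
      refine ⟨h, ?_⟩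
      have hz : QuotientGroup.mk' Z (z : G) = 1 := (QuotientGroup.eq_one_iff (z : G)).mpr z.2
      simp only [MonoidHom.noncommCoprod_apply, MonoidHom.comp_apply, Subgroup.subtype_apply,
        map_mul, hz, mul_one]
  exact ⟨(MulEquiv.ofBijective _ hmul).symm.trans
    ((MulEquiv.ofBijective _ hquot).prodCongr (MulEquiv.refl Z))⟩

/-- If `G` is a central extension of a perfect group by a subgroup `Z₁` of order two, then
either `G` is perfect, or `G` is the internal direct product of its commutator subgroup
and `Z₁`, so that `G ≅ (G ⧸ Z₁) × Z₁`. -/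
theorem perfect_or_direct_product_of_central_extension
    {G : Type} [Group G] (Z₁ : Subgroup G) [Z₁.Normal]
    (hZc : Z₁ ≤ Subgroup.center G) (hZcard : Nat.card Z₁ = 2)
    (hperf : commutator (G ⧸ Z₁) = ⊤) :
    commutator G = ⊤ ∨
      (commutator G ⊓ Z₁ = ⊥ ∧ commutator G ⊔ Z₁ = ⊤ ∧
        Nonempty (G ≃* (G ⧸ Z₁) × Z₁)) := by
  have hsup := commutator_sup_eq_top_of_quotient_perfect Z₁ hperf
  have : Fact (Nat.card Z₁).Prime := ⟨hZcard ▸ Nat.prime_two⟩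
  rcases ((commutator G).subgroupOf Z₁).eq_bot_or_eq_top_of_prime_card with h | h
  · have hinf : commutator G ⊓ Z₁ = ⊥ := (Subgroup.subgroupOf_eq_bot.mp h).eq_bot
    exact Or.inr ⟨hinf, hsup,
      nonempty_mulEquiv_quotient_prod_of_le_center _ Z₁ hZc hinf hsup⟩
  · left
    rwa [sup_eq_left.mpr (Subgroup.subgroupOf_eq_top.mp h)] at hsup
end

section
/- Let l and r be quaternions with ‖l‖ = ‖r‖ = 1, and let φ(l,r) : ℍ → ℍ be the map q ↦ l · q · r⁻¹. Then φ(l,r) is an ℝ-linear isometry of the quaternions, and its fixed-point subspace {q ∈ ℍ | l q r⁻¹ = q} has real dimension 2 (equivalently, φ(l,r) is a rotation of the 4-dimensional Euclidean space ℍ) if and only if Re(l) = Re(r) and Re(l) ∉ {1, −1}. -/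
/-!
The fixed-point space is `K = {q | l * q = q * r}`. A nonzero `q₀ ∈ K` conjugates `r` into `l`,
so their real parts agree; and if that real part is `±1` then `l = r = ±1` and `K` is
everything, of dimension 4. Conversely, suppose `l` and `r` have the same real part, distinct
from `±1`. Then `l` is a root of `X ^ 2 - 2 * l.re * X + 1`, whose coefficients are real and
shared by `r`, so `l * x - x * star r ∈ K` for every `x`; not all of these vanish, as `l` is
not central (`exists_ne_zero_mul_eq_mul`). Given a nonzero `q₀ ∈ K`, right multiplication
by `q₀` identifies the centralizer of `l` with `K`, and the centralizer of a nonreal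
quaternion `l` is the plane spanned by `1` and `l` (`eq_add_mul_of_commute`).
-/

open Module Quaternion

/-- The squared norm of a unit quaternion, in coordinates. -/
lemma sq_sum_of_norm_one {l : ℍ[ℝ]} (hl : ‖l‖ = 1) :
    l.re ^ 2 + l.imI ^ 2 + l.imJ ^ 2 + l.imK ^ 2 = 1 := by
  rw [← Quaternion.normSq_def', Quaternion.normSq_eq_norm_mul_self, hl, one_mul]

lemma eq_coe_re_of_norm_one {l : ℍ[ℝ]} (hl : ‖l‖ = 1) (h : l.re ^ 2 = 1) :
    l = (l.re : ℍ[ℝ]) := by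
  have h1 := sq_sum_of_norm_one hl
  have hI : l.imI = 0 := by nlinarith [sq_nonneg l.imI, sq_nonneg l.imJ, sq_nonneg l.imK]
  have hJ : l.imJ = 0 := by nlinarith [sq_nonneg l.imI, sq_nonneg l.imJ, sq_nonneg l.imK]
  have hK : l.imK = 0 := by nlinarith [sq_nonneg l.imI, sq_nonneg l.imJ, sq_nonneg l.imK]
  ext <;> simp [hI, hJ, hK]

lemma im_sq_sum_ne_zero {l : ℍ[ℝ]} (hl : ‖l‖ = 1) (h1 : l.re ≠ 1) (h2 : l.re ≠ -1) :
    l.imI ^ 2 + l.imJ ^ 2 + l.imK ^ 2 ≠ 0 := by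
  intro h
  have h3 := sq_sum_of_norm_one hl
  rcases eq_or_eq_neg_of_sq_eq_sq l.re 1 (show l.re ^ 2 = 1 ^ 2 by linarith) with h4 | h4
  · exact h1 h4
  · exact h2 h4

/-- A quaternion commuting with a nonreal `l` has imaginary part parallel to that of `l`,
because the commutator is twice the cross product of the imaginary parts. -/
lemma eq_add_mul_of_commute {l p : ℍ[ℝ]} (hs : l.imI ^ 2 + l.imJ ^ 2 + l.imK ^ 2 ≠ 0)
    (h : l * p = p * l) : ∃ a b : ℝ, p = (a : ℍ[ℝ]) + (b : ℍ[ℝ]) * l := by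
  have hI := congrArg QuaternionAlgebra.imI h
  have hJ := congrArg QuaternionAlgebra.imJ h
  have hK := congrArg QuaternionAlgebra.imK h
  simp only [Quaternion.imI_mul, Quaternion.imJ_mul, Quaternion.imK_mul] at hI hJ hK
  -- `b` is the coefficient of the orthogonal projection of `p.im` onto the line of `l.im`.
  obtain ⟨b, hb⟩ : ∃ b : ℝ, b * (l.imI ^ 2 + l.imJ ^ 2 + l.imK ^ 2) =
      p.imI * l.imI + p.imJ * l.imJ + p.imK * l.imK := ⟨_, div_mul_cancel₀ _ hs⟩
  refine ⟨p.re - b * l.re, b, ?_⟩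
  ext
  · simp
  · simp
    apply mul_right_cancel₀ hs
    linear_combination (-l.imI) * hb - l.imJ / 2 * hK + l.imK / 2 * hJ
  · simp
    apply mul_right_cancel₀ hs
    linear_combination (-l.imJ) * hb + l.imI / 2 * hK - l.imK / 2 * hI
  · simp
    apply mul_right_cancel₀ hs
    linear_combination (-l.imK) * hb - l.imI / 2 * hJ + l.imJ / 2 * hI

/-- A unit quaternion satisfies its characteristic equation. -/
lemma mul_self_of_norm_one {l : ℍ[ℝ]} (hl : ‖l‖ = 1) :
    l * l = ((2 * l.re : ℝ) : ℍ[ℝ]) * l - 1 := by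
  have h := sq_sum_of_norm_one hl
  ext
  · simp; linear_combination -h
  all_goals simp; ring

/-- Unit quaternions with the same real part, distinct from `±1`, are conjugate. -/
lemma exists_ne_zero_mul_eq_mul {l r : ℍ[ℝ]} (hl : ‖l‖ = 1) (hr : ‖r‖ = 1)
    (h : l.re = r.re) (hs : l.imI ^ 2 + l.imJ ^ 2 + l.imK ^ 2 ≠ 0) :
    ∃ q : ℍ[ℝ], q ≠ 0 ∧ l * q = q * r := by
  have key (x : ℍ[ℝ]) : l * (l * x - x * star r) = (l * x - x * star r) * r := by
    have h1 : star r * r = 1 := by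
      rw [Quaternion.star_mul_self, Quaternion.normSq_eq_norm_mul_self, hr]; simp
    have h2 : star r = ((2 * l.re : ℝ) : ℍ[ℝ]) - r := by
      ext <;> simp [h]; ring
    have h3 : x * ((2 * l.re : ℝ) : ℍ[ℝ]) = ((2 * l.re : ℝ) : ℍ[ℝ]) * x :=
      (Quaternion.coe_commutes _ _).symm
    have h4 : l * ((2 * l.re : ℝ) : ℍ[ℝ]) = ((2 * l.re : ℝ) : ℍ[ℝ]) * l :=
      (Quaternion.coe_commutes _ _).symm
    rw [sub_mul, mul_assoc x, h1, mul_sub, ← mul_assoc l l, mul_self_of_norm_one hl, h2,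
      mul_sub x, h3, mul_sub, ← mul_assoc l _ x, h4]
    noncomm_ring
  by_contra! hc
  have hz (x : ℍ[ℝ]) : l * x = x * star r := by
    by_contra hx
    exact hc _ (sub_ne_zero.2 hx) (key x)
  -- The case `x = 1` turns the vanishing into centrality of `l`.
  have h1 : l = star r := by simpa using hz 1
  rw [← h1] at hz
  have cJ (p : ℍ[ℝ]) := congrArg QuaternionAlgebra.imJ (hz p)
  have cK (p : ℍ[ℝ]) := congrArg QuaternionAlgebra.imK (hz p)
  simp only [Quaternion.imJ_mul, Quaternion.imK_mul] at cJ cK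
  have a1 := cJ ⟨0, 1, 0, 0⟩
  have a2 := cK ⟨0, 1, 0, 0⟩
  have a3 := cK ⟨0, 0, 1, 0⟩
  dsimp only at a1 a2 a3
  apply hs
  have b1 : l.imK = 0 := by linarith
  have b2 : l.imJ = 0 := by linarith
  have b3 : l.imI = 0 := by linarith
  simp [b1, b2, b3]

/-- For unit quaternions `l, r`, the map `q ↦ l * q * r⁻¹` is a real-linear isometry of `ℍ`,
and its fixed-point subspace is 2-dimensional (i.e. the map is a rotation of `ℍ ≅ ℝ⁴`)
if and only if `Re l = Re r` and `Re l ∉ {1, -1}`. -/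
theorem quaternion_conjugation_rotation_iff (l r : ℍ[ℝ]) (hl : ‖l‖ = 1) (hr : ‖r‖ = 1) :
    (∃ e : ℍ[ℝ] ≃ₗᵢ[ℝ] ℍ[ℝ], ∀ q, e q = l * q * r⁻¹) ∧
      (finrank ℝ
          (LinearMap.ker
            ((LinearMap.mulLeft ℝ l ∘ₗ LinearMap.mulRight ℝ r⁻¹) - LinearMap.id)) = 2 ↔
        (l.re = r.re ∧ l.re ≠ 1 ∧ l.re ≠ -1)) := by
  have hr0 : r ≠ 0 := by rintro rfl; simp at hr
  refine ⟨?_, ?_⟩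
  · let f : ℍ[ℝ] →ₗᵢ[ℝ] ℍ[ℝ] :=
      { LinearMap.mulLeft ℝ l ∘ₗ LinearMap.mulRight ℝ r⁻¹ with
        norm_map' := fun q => by simp [hl, hr] }
    refine ⟨f.toLinearIsometryEquiv rfl, fun q => ?_⟩
    change l * (q * r⁻¹) = _
    rw [mul_assoc]
  set K := LinearMap.ker ((LinearMap.mulLeft ℝ l ∘ₗ LinearMap.mulRight ℝ r⁻¹) - LinearMap.id)
    with hKdef
  have hK (q : ℍ[ℝ]) : q ∈ K ↔ l * q = q * r := by
    rw [hKdef, LinearMap.mem_ker]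
    simp only [LinearMap.sub_apply, LinearMap.comp_apply, LinearMap.mulLeft_apply,
      LinearMap.mulRight_apply, LinearMap.id_apply, sub_eq_zero]
    rw [← mul_assoc, mul_inv_eq_iff_eq_mul₀ hr0]
  constructor
  · intro h2
    have hre : l.re = r.re := by
      have hne : K ≠ ⊥ := by
        intro hb
        rw [hb, finrank_bot] at h2
        omega
      obtain ⟨q, hq, hq0⟩ := K.ne_bot_iff.1 hne
      have hl' : l = q * r * q⁻¹ := by
        rw [← (hK q).1 hq, mul_assoc, mul_inv_cancel₀ hq0, mul_one]
      -- The real part is a trace: `(x * y).re = (y * x).re`.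
      have hcomm (x y : ℍ[ℝ]) : (x * y).re = (y * x).re := by
        simp only [Quaternion.re_mul]; ring
      rw [hl', hcomm, ← mul_assoc, inv_mul_cancel₀ hq0, one_mul]
    have hsq : l.re ^ 2 ≠ 1 := by
      intro h
      have e1 := eq_coe_re_of_norm_one hl h
      have e2 := eq_coe_re_of_norm_one hr (hre ▸ h)
      have htop : K = ⊤ := by
        rw [Submodule.eq_top_iff']
        intro q
        rw [hK, e1, e2, hre]
        exact Quaternion.coe_commutes _ _
      rw [htop, finrank_top, Quaternion.finrank_eq_four] at h2
      omega
    refine ⟨hre, fun h => hsq (by rw [h]; norm_num), fun h => hsq (by rw [h]; norm_num)⟩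
  · rintro ⟨hre, h1, h2⟩
    have hs := im_sq_sum_ne_zero hl h1 h2
    obtain ⟨q₀, hq₀, hq⟩ := exists_ne_zero_mul_eq_mul hl hr hre hs
    have hli : LinearIndependent ℝ ![q₀, l * q₀] := by
      rw [LinearIndependent.pair_iff]
      intro s t hst
      have h3 : ((s : ℍ[ℝ]) + (t : ℍ[ℝ]) * l) * q₀ = 0 := by
        rw [add_mul, mul_assoc, Quaternion.coe_mul_eq_smul, Quaternion.coe_mul_eq_smul, hst]
      have h4 := (mul_eq_zero.1 h3).resolve_right hq₀
      have a0 := congrArg QuaternionAlgebra.re h4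
      have a1 := congrArg QuaternionAlgebra.imI h4
      have a2 := congrArg QuaternionAlgebra.imJ h4
      have a3 := congrArg QuaternionAlgebra.imK h4
      simp at a0 a1 a2 a3
      have ht : t = 0 := by
        by_contra ht
        simp only [ht, false_or] at a1 a2 a3
        exact hs (by simp [a1, a2, a3])
      subst ht
      simpa using a0
    have hspan : K = Submodule.span ℝ (Set.range ![q₀, l * q₀]) := by
      apply le_antisymm
      · intro q hqK
        rw [hK] at hqK
        have hr' : r = q₀⁻¹ * l * q₀ := by
          rw [mul_assoc, hq, inv_mul_cancel_left₀ hq₀]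
        have hc : l * (q * q₀⁻¹) = (q * q₀⁻¹) * l := by
          rw [← mul_assoc, hqK, hr']
          simp only [mul_assoc, mul_inv_cancel₀ hq₀, mul_one]
        obtain ⟨a, b, hab⟩ := eq_add_mul_of_commute hs hc
        have hq' : q = a • q₀ + b • (l * q₀) := by
          rw [← Quaternion.coe_mul_eq_smul, ← Quaternion.coe_mul_eq_smul, ← mul_assoc,
            ← add_mul, ← hab, inv_mul_cancel_right₀ hq₀]
        rw [Matrix.range_cons_cons_empty, Submodule.mem_span_pair]
        exact ⟨a, b, hq'.symm⟩
      · rw [Submodule.span_le, Matrix.range_cons_cons_empty]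
        rintro x (rfl | rfl)
        · exact (hK _).2 hq
        · refine (hK _).2 ?_
          rw [mul_assoc, hq]
    rw [hspan, finrank_span_eq_card hli, Fintype.card_fin]
end
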